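/- Fix masses m₁, m₂, m₃ > 0 and μ₁ > 0, and set κ = M_tot/(m₁²(m₂+m₃)²) and, for μ₂ > 0, u(μ₂) = (μ₂/μ₁)/(m₂m₃√(κ/(m₂+m₃))). Then there exist ε > 0 and functions q₁, q₂, q₃, q₄ : (0, ε) → ℝ such that for every μ₂ ∈ (0, ε) the point with positions (q₁(μ₂), q₂(μ₂), q₃(μ₂), q₄(μ₂)) and zero momenta is a critical point of the fully reduced Hamiltonian H with parameters (μ₁, μ₂), and, as μ₂ → 0⁺, the following limits hold: q₁(μ₂)/(κμ₁²u(μ₂)²) → 1, q₄(μ₂)/(κμ₁²) → 1, q₂(μ₂)/(κμ₁²u(μ₂)¹⁰) → (3/2)m₁(m₂−m₃)/(m₂+m₃)², and q₃(μ₂)/(κμ₁²u(μ₂)¹²) → −(3/2)M_tot m₂m₃(m₂−m₃)/(m₂+m₃)⁴. -/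

import Mathlib

noncomputable section

/-- `f(q_i, q_j, L₃) = ((L_d + L_s)²q_i² + (L_d − L_s)²q_j²)/(16A²)`,
with `L_d = √(Δ² − L₃²)`, `L_s = √(Σ² − L₃²)`, `Δ = μ₁ − μ₂`, `Σ = μ₁ + μ₂`. -/
def fred (μ₁ μ₂ A qi qj L₃ : ℝ) : ℝ :=
  let Ld := Real.sqrt ((μ₁ - μ₂) ^ 2 - L₃ ^ 2)
  let Ls := Real.sqrt ((μ₁ + μ₂) ^ 2 - L₃ ^ 2)
  ((Ld + Ls) ^ 2 * qi ^ 2 + (Ld - Ls) ^ 2 * qj ^ 2) / (16 * A ^ 2)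

/-- The fully reduced Hamiltonian of the three-body problem in `ℝ⁴` on the phase space
`ℝ⁴ × ℝ⁴` (positions `q`, momenta `p`). -/
def Hred (ν₁ ν₂ μ₁ μ₂ : ℝ) (V : (Fin 3 → ℝ) → ℝ) (z : (Fin 4 → ℝ) × (Fin 4 → ℝ)) : ℝ :=
  let q := z.1; let p := z.2
  let A := (q 0 * q 3 - q 1 * q 2) / 2
  let L₃ := q 0 * p 1 - q 1 * p 0 + q 2 * p 3 - q 3 * p 2
  (1 / (2 * ν₁)) * (p 0 ^ 2 + p 1 ^ 2 + fred μ₁ μ₂ A (q 2) (q 3) L₃) +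
    (1 / (2 * ν₂)) * (p 2 ^ 2 + p 3 ^ 2 + fred μ₁ μ₂ A (q 0) (q 1) L₃) +
    V ![q 0 ^ 2 + q 1 ^ 2, q 2 ^ 2 + q 3 ^ 2, q 0 * q 2 + q 1 * q 3]

/-- The Newtonian potential of the three-body problem in the translation-reduced
variables: `V(s₁,s₂,s₃) = −m₂m₃/√s₁ − m₃m₁/√(a₂²s₁+s₂+2a₂s₃) − m₁m₂/√(a₃²s₁+s₂−2a₃s₃)`
with `a₂ = m₂/(m₂+m₃)`, `a₃ = m₃/(m₂+m₃)`. -/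
def Vnewt (m₁ m₂ m₃ : ℝ) (s : Fin 3 → ℝ) : ℝ :=
  -(m₂ * m₃ / Real.sqrt (s 0)) -
    m₃ * m₁ / Real.sqrt ((m₂ / (m₂ + m₃)) ^ 2 * s 0 + s 1 + 2 * (m₂ / (m₂ + m₃)) * s 2) -
    m₁ * m₂ / Real.sqrt ((m₃ / (m₂ + m₃)) ^ 2 * s 0 + s 1 - 2 * (m₃ / (m₂ + m₃)) * s 2)

open Filter Topology

/-! ### Rescaled equations -/

def eRho (u x z : ℝ) : ℝ := Real.sqrt (x ^ 2 + u ^ 16 * z ^ 2)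

def eR (a u x y z w : ℝ) : ℝ :=
  Real.sqrt (a ^ 2 * (u ^ 4 * x ^ 2 + u ^ 20 * z ^ 2) + y ^ 2 + u ^ 24 * w ^ 2
    + 2 * a * u ^ 10 * (u ^ 4 * x * w + z * y))

def eDel (u x y z w : ℝ) : ℝ := x * y - u ^ 20 * z * w

def eB (k n1 n2 c u x y z w : ℝ) : ℝ :=
  k * (n1 * (u ^ 22 * w ^ 2 + c ^ 2 * y ^ 2) + u ^ 2 * n2 * (x ^ 2 + c ^ 2 * u ^ 18 * z ^ 2))
    / eDel u x y z w ^ 3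

def eNx (β₂ β₃ a₂ a₃ u x y z w : ℝ) : ℝ :=
  β₂ * (a₂ ^ 2 * u ^ 4 * x + a₂ * u ^ 14 * w) / eR a₂ u x y z w ^ 3
    + β₃ * (a₃ ^ 2 * u ^ 4 * x - a₃ * u ^ 14 * w) / eR (-a₃) u x y z w ^ 3

def eE1 (α β₂ β₃ a₂ a₃ k n1 n2 c u x y z w : ℝ) : ℝ :=
  -(y * eB k n1 n2 c u x y z w) + u ^ 2 * k * n2 * x / eDel u x y z w ^ 2
    + α * x / eRho u x z ^ 3 + u ^ 2 * eNx β₂ β₃ a₂ a₃ u x y z w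

def eE2 (β₂ β₃ a₂ a₃ k n1 n2 c u x y z w : ℝ) : ℝ :=
  -(x * (k * n1 * u ^ 20 * w ^ 2 + k * n2 * (x ^ 2 + c ^ 2 * u ^ 18 * z ^ 2))
      / eDel u x y z w ^ 3)
    - k * n1 * c ^ 2 * u ^ 18 * y * z * w / eDel u x y z w ^ 3
    + β₂ * (y + a₂ * u ^ 10 * z) / eR a₂ u x y z w ^ 3
    + β₃ * (y - a₃ * u ^ 10 * z) / eR (-a₃) u x y z w ^ 3

def eQ (r t : ℝ) : ℝ := (t ^ 2 + t * r + r ^ 2) / ((t + r) * r ^ 3 * t ^ 3)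

def eE3 (α β₂ β₃ a₂ a₃ γ k n1 n2 c u x y z w : ℝ) : ℝ :=
  u ^ 4 * w * eB k n1 n2 c u x y z w + k * n2 * c ^ 2 * u ^ 4 * z / eDel u x y z w ^ 2
    + α * z / eRho u x z ^ 3
    - γ * y * ((a₂ ^ 2 - a₃ ^ 2) * (x ^ 2 + u ^ 16 * z ^ 2)
        + 2 * (a₂ + a₃) * u ^ 6 * (u ^ 4 * x * w + z * y))
        * eQ (eR a₂ u x y z w) (eR (-a₃) u x y z w)
    + u ^ 6 * z * (a₂ ^ 2 * β₂ / eR a₂ u x y z w ^ 3 + a₃ ^ 2 * β₃ / eR (-a₃) u x y z w ^ 3)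

def eE4 (β₂ β₃ a₂ a₃ k n1 n2 c u x y z w : ℝ) : ℝ :=
  k * n1 * y * w / eDel u x y z w ^ 2 - u ^ 2 * x * w * eB k n1 n2 c u x y z w
    + k * n2 * x * z / eDel u x y z w ^ 2 + z * eNx β₂ β₃ a₂ a₃ u x y z w
    - u ^ 2 * k * n2 * c ^ 2 * x * z / eDel u x y z w ^ 2
    + y * u ^ 4 * w * (β₂ / eR a₂ u x y z w ^ 3 + β₃ / eR (-a₃) u x y z w ^ 3)
    - u ^ 4 * x * z *
      (a₂ ^ 2 * β₂ / eR a₂ u x y z w ^ 3 + a₃ ^ 2 * β₃ / eR (-a₃) u x y z w ^ 3)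

def ePhi (α β₂ β₃ a₂ a₃ γ k n1 n2 c : ℝ) (v : ℝ × (ℝ × ℝ × ℝ × ℝ)) : ℝ × ℝ × ℝ × ℝ :=
  (eE1 α β₂ β₃ a₂ a₃ k n1 n2 c v.1 v.2.1 v.2.2.1 v.2.2.2.1 v.2.2.2.2,
   eE2 β₂ β₃ a₂ a₃ k n1 n2 c v.1 v.2.1 v.2.2.1 v.2.2.2.1 v.2.2.2.2,
   eE3 α β₂ β₃ a₂ a₃ γ k n1 n2 c v.1 v.2.1 v.2.2.1 v.2.2.2.1 v.2.2.2.2,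
   eE4 β₂ β₃ a₂ a₃ k n1 n2 c v.1 v.2.1 v.2.2.1 v.2.2.2.1 v.2.2.2.2)

/-! ### Behaviour at `u = 0` -/

lemma eRho_zero {x : ℝ} (z : ℝ) (hx : 0 < x) : eRho 0 x z = x := by
  simp [eRho, Real.sqrt_sq hx.le]

lemma eR_zero (a x : ℝ) {y : ℝ} (z w : ℝ) (hy : 0 < y) : eR a 0 x y z w = y := by
  simp [eR, Real.sqrt_sq hy.le]

lemma eE1_zero {α k n1 c : ℝ} (β₂ β₃ a₂ a₃ n2 : ℝ) {x y : ℝ} (z w : ℝ) (hx : 0 < x) (hy : 0 < y)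
    (h : k * n1 * c ^ 2 = α) :
    eE1 α β₂ β₃ a₂ a₃ k n1 n2 c 0 x y z w = α * (x⁻¹ ^ 2 - x⁻¹ ^ 3) := by
  subst h
  simp only [eE1, eB, eNx, eDel, eRho_zero z hx, eR_zero _ x z w hy]
  field_simp
  ring

lemma eE2_zero {β₂ β₃ k n2 : ℝ} (a₂ a₃ n1 c : ℝ) {x y : ℝ} (z w : ℝ) (hx : 0 < x) (hy : 0 < y)
    (h : k * n2 = β₂ + β₃) :
    eE2 β₂ β₃ a₂ a₃ k n1 n2 c 0 x y z w = (k * n2) * (y⁻¹ ^ 2 - y⁻¹ ^ 3) := by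
  have : β₃ = k * n2 - β₂ := by linarith
  subst this
  simp only [eE2, eDel, eR_zero _ x z w hy]
  field_simp
  ring

lemma eE3_zero (α β₂ β₃ a₂ a₃ γ k n1 n2 c : ℝ) {x y : ℝ} (z w : ℝ) (hx : 0 < x) (hy : 0 < y) :
    eE3 α β₂ β₃ a₂ a₃ γ k n1 n2 c 0 x y z w =
      α * z / x ^ 3 - 3 / 2 * γ * (a₂ ^ 2 - a₃ ^ 2) * x ^ 2 / y ^ 4 := by
  simp only [eE3, eB, eQ, eDel, eRho_zero z hx, eR_zero _ x z w hy]
  field_simp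
  ring

lemma eE4_zero (β₂ β₃ a₂ a₃ k n1 n2 c : ℝ) {x y : ℝ} (z w : ℝ) (hx : 0 < x) (hy : 0 < y) :
    eE4 β₂ β₃ a₂ a₃ k n1 n2 c 0 x y z w =
      k * n1 * w / (x ^ 2 * y) + k * n2 * z / (x * y ^ 2) := by
  simp only [eE4, eB, eNx, eDel, eR_zero _ x z w hy]
  field_simp
  ring

lemma ePhi_contDiffAt (α β₂ β₃ a₂ a₃ γ k n1 n2 c z w : ℝ) :
    ContDiffAt ℝ 1 (ePhi α β₂ β₃ a₂ a₃ γ k n1 n2 c) (0, 1, 1, z, w) := by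
  have hρ : ContDiffAt ℝ 1 (fun v : ℝ × (ℝ × ℝ × ℝ × ℝ) => eRho v.1 v.2.1 v.2.2.2.1)
      (0, 1, 1, z, w) := by
    unfold eRho
    refine ContDiffAt.sqrt ?_ (by simp)
    fun_prop
  have hR : ∀ a : ℝ, ContDiffAt ℝ 1
      (fun v : ℝ × (ℝ × ℝ × ℝ × ℝ) => eR a v.1 v.2.1 v.2.2.1 v.2.2.2.1 v.2.2.2.2)
      (0, 1, 1, z, w) := by
    intro a
    unfold eR
    refine ContDiffAt.sqrt ?_ (by simp)
    fun_prop
  have hρ0 : eRho 0 1 z ≠ 0 := by rw [eRho_zero _ one_pos]; norm_num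
  have hR0 : ∀ a : ℝ, eR a 0 1 1 z w ≠ 0 := by
    intro a; rw [eR_zero _ _ _ _ one_pos]; norm_num
  have hD : ContDiffAt ℝ 1
      (fun v : ℝ × (ℝ × ℝ × ℝ × ℝ) => eDel v.1 v.2.1 v.2.2.1 v.2.2.2.1 v.2.2.2.2)
      (0, 1, 1, z, w) := by
    unfold eDel
    fun_prop
  have hD0 : eDel 0 1 1 z w ≠ 0 := by simp [eDel]
  have hB : ContDiffAt ℝ 1
      (fun v : ℝ × (ℝ × ℝ × ℝ × ℝ) => eB k n1 n2 c v.1 v.2.1 v.2.2.1 v.2.2.2.1 v.2.2.2.2)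
      (0, 1, 1, z, w) := by
    unfold eB
    refine ContDiffAt.div (by fun_prop) (hD.pow 3) (pow_ne_zero _ hD0)
  have hN : ContDiffAt ℝ 1
      (fun v : ℝ × (ℝ × ℝ × ℝ × ℝ) => eNx β₂ β₃ a₂ a₃ v.1 v.2.1 v.2.2.1 v.2.2.2.1 v.2.2.2.2)
      (0, 1, 1, z, w) := by
    unfold eNx
    refine ContDiffAt.add (ContDiffAt.div (by fun_prop) ((hR _).pow 3) (pow_ne_zero _ (hR0 _)))
      (ContDiffAt.div (by fun_prop) ((hR _).pow 3) (pow_ne_zero _ (hR0 _)))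
  have hQ : ContDiffAt ℝ 1
      (fun v : ℝ × (ℝ × ℝ × ℝ × ℝ) => eQ (eR a₂ v.1 v.2.1 v.2.2.1 v.2.2.2.1 v.2.2.2.2)
        (eR (-a₃) v.1 v.2.1 v.2.2.1 v.2.2.2.1 v.2.2.2.2))
      (0, 1, 1, z, w) := by
    unfold eQ
    have h2 := hR a₂
    have h3 := hR (-a₃)
    refine ContDiffAt.div (by fun_prop) (by fun_prop) ?_
    simp only [eR_zero _ _ _ _ one_pos]
    norm_num
  have hdR : ∀ (a : ℝ) (f : ℝ × (ℝ × ℝ × ℝ × ℝ) → ℝ), ContDiffAt ℝ 1 f (0, 1, 1, z, w) →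
      ContDiffAt ℝ 1 (fun v => f v / eR a v.1 v.2.1 v.2.2.1 v.2.2.2.1 v.2.2.2.2 ^ 3)
      (0, 1, 1, z, w) := fun a f hf => hf.div ((hR a).pow 3) (pow_ne_zero _ (hR0 a))
  have hdρ : ∀ (f : ℝ × (ℝ × ℝ × ℝ × ℝ) → ℝ), ContDiffAt ℝ 1 f (0, 1, 1, z, w) →
      ContDiffAt ℝ 1 (fun v => f v / eRho v.1 v.2.1 v.2.2.2.1 ^ 3)
      (0, 1, 1, z, w) := fun f hf => hf.div (hρ.pow 3) (pow_ne_zero _ hρ0)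
  have hdD : ∀ (n : ℕ) (f : ℝ × (ℝ × ℝ × ℝ × ℝ) → ℝ), ContDiffAt ℝ 1 f (0, 1, 1, z, w) →
      ContDiffAt ℝ 1 (fun v => f v / eDel v.1 v.2.1 v.2.2.1 v.2.2.2.1 v.2.2.2.2 ^ n)
      (0, 1, 1, z, w) := fun n f hf => hf.div (hD.pow n) (pow_ne_zero _ hD0)
  unfold ePhi
  refine ContDiffAt.prodMk ?_ (ContDiffAt.prodMk ?_ (ContDiffAt.prodMk ?_ ?_))
  · unfold eE1
    have h1 := hdD 2 (fun v => v.1 ^ 2 * k * n2 * v.2.1) (by fun_prop)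
    have h2 := hdρ (fun v => α * v.2.1) (by fun_prop)
    fun_prop
  · unfold eE2
    refine ContDiffAt.add (ContDiffAt.add (ContDiffAt.sub (ContDiffAt.neg ?_) ?_) ?_) ?_
    · exact hdD 3 _ (by fun_prop)
    · exact hdD 3 _ (by fun_prop)
    · exact hdR a₂ _ (by fun_prop)
    · exact hdR (-a₃) _ (by fun_prop)
  · unfold eE3
    have h1 := hdD 2 (fun v => k * n2 * c ^ 2 * v.1 ^ 4 * v.2.2.2.1) (by fun_prop)
    have h2 := hdρ (fun v => α * v.2.2.2.1) (by fun_prop)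
    have h3 := hdR a₂ (fun v => a₂ ^ 2 * β₂) (by fun_prop)
    have h4 := hdR (-a₃) (fun v => a₃ ^ 2 * β₃) (by fun_prop)
    fun_prop
  · unfold eE4
    have h1 := hdD 2 (fun v => k * n1 * v.2.2.1 * v.2.2.2.2) (by fun_prop)
    have h2 := hdD 2 (fun v => k * n2 * v.2.1 * v.2.2.2.1) (by fun_prop)
    have h5 := hdD 2 (fun v => v.1 ^ 2 * k * n2 * c ^ 2 * v.2.1 * v.2.2.2.1) (by fun_prop)
    have h3 := hdR a₂ (fun v => a₂ ^ 2 * β₂) (by fun_prop)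
    have h4 := hdR (-a₃) (fun v => a₃ ^ 2 * β₃) (by fun_prop)
    have h6 := hdR a₂ (fun v => β₂) (by fun_prop)
    have h7 := hdR (-a₃) (fun v => β₃) (by fun_prop)
    fun_prop

lemma hasDerivAt_inv_sub (v : ℝ) :
    HasDerivAt (fun t : ℝ => (1 + t * v)⁻¹ ^ 2 - (1 + t * v)⁻¹ ^ 3) v 0 := by
  have h0 : HasDerivAt (fun t : ℝ => 1 + t * v) v 0 := by
    simpa using ((hasDerivAt_id (0 : ℝ)).mul_const v).const_add 1
  have h1 := h0.fun_inv (by simp)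
  refine ((h1.fun_pow 2).fun_sub (h1.fun_pow 3)).congr_deriv ?_
  norm_num
  ring

lemma ePhi_exists {α β₂ β₃ a₂ a₃ γ k n1 n2 c z₀ w₀ : ℝ} (hα : 0 < α) (hk : 0 < k) (hn1 : 0 < n1)
    (hn2 : 0 < n2) (h1 : k * n1 * c ^ 2 = α) (h2 : k * n2 = β₂ + β₃)
    (hz : α * z₀ = 3 / 2 * γ * (a₂ ^ 2 - a₃ ^ 2)) (hw : n1 * w₀ + n2 * z₀ = 0) :
    ∃ ψ : ℝ → ℝ × ℝ × ℝ × ℝ, Tendsto ψ (𝓝 0) (𝓝 (1, 1, z₀, w₀)) ∧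
      ∀ᶠ u in 𝓝 (0 : ℝ), ePhi α β₂ β₃ a₂ a₃ γ k n1 n2 c (u, ψ u) = 0 := by
  have hC := ePhi_contDiffAt α β₂ β₃ a₂ a₃ γ k n1 n2 c z₀ w₀
  set Φ := ePhi α β₂ β₃ a₂ a₃ γ k n1 n2 c with hΦ
  have hS := hC.hasStrictFDerivAt one_ne_zero
  set L := fderiv ℝ Φ (0, 1, 1, z₀, w₀) ∘L .inr ℝ ℝ (ℝ × ℝ × ℝ × ℝ) with hL
  have hinj : Function.Injective L := by
    rw [injective_iff_map_eq_zero]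
    rintro ⟨v1, v2, v3, v4⟩ hv
    have hline : HasDerivAt (fun t : ℝ => Φ (0, 1 + t * v1, 1 + t * v2, z₀ + t * v3, w₀ + t * v4))
        0 0 := by
      have hl : ∀ a v : ℝ, HasDerivAt (fun t : ℝ => a + t * v) v 0 := fun a v => by
        simpa using ((hasDerivAt_id (0 : ℝ)).mul_const v).const_add a
      have hg : HasDerivAt (fun t : ℝ => ((0 : ℝ), 1 + t * v1, 1 + t * v2, z₀ + t * v3, w₀ + t * v4))
          (0, v1, v2, v3, v4) 0 :=
        (hasDerivAt_const _ _).prodMk ((hl _ _).prodMk ((hl _ _).prodMk ((hl _ _).prodMk (hl _ _))))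
      have hF : HasFDerivAt Φ (fderiv ℝ Φ (0, 1, 1, z₀, w₀))
          ((0 : ℝ), 1 + (0 : ℝ) * v1, 1 + (0 : ℝ) * v2, z₀ + (0 : ℝ) * v3, w₀ + (0 : ℝ) * v4) := by
        simpa using hS.hasFDerivAt
      have := hF.comp_hasDerivAt (0 : ℝ) hg
      have hv' : (fderiv ℝ Φ (0, 1, 1, z₀, w₀)) (0, v1, v2, v3, v4) = 0 := by
        simpa [hL] using hv
      rw [hv'] at this
      exact this
    have hpos : ∀ v : ℝ, ∀ᶠ t in 𝓝 (0 : ℝ), 0 < 1 + t * v := fun v => by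
      have : ContinuousAt (fun t : ℝ => 1 + t * v) 0 := by fun_prop
      exact this.eventually (lt_mem_nhds (by simp))
    have hv1 : v1 = 0 := by
      have ha : HasDerivAt (fun t : ℝ => α * ((1 + t * v1)⁻¹ ^ 2 - (1 + t * v1)⁻¹ ^ 3)) 0 0 := by
        refine HasDerivAt.congr_of_eventuallyEq hline.fst ?_
        filter_upwards [hpos v1, hpos v2] with t ht1 ht2
        simp only [hΦ, ePhi]
        rw [eE1_zero _ _ _ _ _ _ _ ht1 ht2 h1]
      have := ha.unique ((hasDerivAt_inv_sub v1).const_mul α)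
      simpa [hα.ne'] using this.symm
    have hv2 : v2 = 0 := by
      have ha : HasDerivAt (fun t : ℝ => (k * n2) * ((1 + t * v2)⁻¹ ^ 2 - (1 + t * v2)⁻¹ ^ 3)) 0 0 := by
        refine HasDerivAt.congr_of_eventuallyEq hline.snd.fst ?_
        filter_upwards [hpos v1, hpos v2] with t ht1 ht2
        simp only [hΦ, ePhi]
        rw [eE2_zero _ _ _ _ _ _ ht1 ht2 h2]
      have := ha.unique ((hasDerivAt_inv_sub v2).const_mul (k * n2))
      simpa [hk.ne', hn2.ne'] using this.symm
    subst hv1 hv2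
    have hl : ∀ a v : ℝ, HasDerivAt (fun t : ℝ => a + t * v) v 0 := fun a v => by
        simpa using ((hasDerivAt_id (0 : ℝ)).mul_const v).const_add a
    have hv3 : v3 = 0 := by
      have ha : HasDerivAt (fun t : ℝ => α * (z₀ + t * v3) - 3 / 2 * γ * (a₂ ^ 2 - a₃ ^ 2)) 0 0 := by
        refine HasDerivAt.congr_of_eventuallyEq hline.snd.snd.fst (Eventually.of_forall fun t => ?_)
        simp only [hΦ, ePhi, mul_zero, add_zero]
        rw [eE3_zero _ _ _ _ _ _ _ _ _ _ _ _ one_pos one_pos]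
        simp
      have := ha.unique (((hl z₀ v3).const_mul α).sub_const _)
      simpa [hα.ne'] using this.symm
    subst hv3
    have hv4 : v4 = 0 := by
      have ha : HasDerivAt (fun t : ℝ => k * n1 * (w₀ + t * v4) + k * n2 * z₀) 0 0 := by
        refine HasDerivAt.congr_of_eventuallyEq hline.snd.snd.snd (Eventually.of_forall fun t => ?_)
        simp only [hΦ, ePhi, mul_zero, add_zero]
        rw [eE4_zero _ _ _ _ _ _ _ _ _ _ one_pos one_pos]
        simp
      have := ha.unique (((hl w₀ v4).const_mul (k * n1)).add_const _)
      simpa [hk.ne', hn1.ne'] using this.symm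
    subst hv4
    rfl
  have hinv : L.IsInvertible :=
    ⟨(LinearEquiv.ofInjectiveEndo (L : (ℝ × ℝ × ℝ × ℝ) →ₗ[ℝ] (ℝ × ℝ × ℝ × ℝ))
      hinj).toContinuousLinearEquiv, ContinuousLinearMap.ext fun _ => rfl⟩
  have hval : Φ (0, 1, 1, z₀, w₀) = 0 := by
    simp only [hΦ, ePhi]
    rw [eE1_zero _ _ _ _ _ _ _ one_pos one_pos h1, eE2_zero _ _ _ _ _ _ one_pos one_pos h2,
      eE3_zero _ _ _ _ _ _ _ _ _ _ _ _ one_pos one_pos,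
      eE4_zero _ _ _ _ _ _ _ _ _ _ one_pos one_pos]
    simp only [Prod.mk_eq_zero]
    refine ⟨by simp, by simp, ?_, ?_⟩
    · rw [hz]; ring
    · linear_combination k * hw
  refine ⟨hS.implicitFunctionOfProdDomain hinv, hS.tendsto_implicitFunctionOfProdDomain hinv, ?_⟩
  have := hS.eventually_apply_implicitFunctionOfProdDomain hinv
  rw [hval] at this
  exact this

/-! ### The gradient of the Hamiltonian at zero momentum -/

def gB (μ₁ μ₂ n1 n2 D q1 q2 q3 q4 : ℝ) : ℝ :=
  (n1 * (μ₁ ^ 2 * q3 ^ 2 + μ₂ ^ 2 * q4 ^ 2) + n2 * (μ₁ ^ 2 * q1 ^ 2 + μ₂ ^ 2 * q2 ^ 2)) / D ^ 3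

def gP1 (μ₁ μ₂ n1 n2 α β₂ β₃ a₂ a₃ D ρ r t q1 q2 q3 q4 : ℝ) : ℝ :=
  -(q4 * gB μ₁ μ₂ n1 n2 D q1 q2 q3 q4) + n2 * μ₁ ^ 2 * q1 / D ^ 2 + α * q1 / ρ ^ 3
    + β₂ * (a₂ ^ 2 * q1 + a₂ * q3) / r ^ 3 + β₃ * (a₃ ^ 2 * q1 - a₃ * q3) / t ^ 3

def gP2 (μ₁ μ₂ n1 n2 α β₂ β₃ a₂ a₃ D ρ r t q1 q2 q3 q4 : ℝ) : ℝ :=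
  q3 * gB μ₁ μ₂ n1 n2 D q1 q2 q3 q4 + n2 * μ₂ ^ 2 * q2 / D ^ 2 + α * q2 / ρ ^ 3
    + β₂ * (a₂ ^ 2 * q2 + a₂ * q4) / r ^ 3 + β₃ * (a₃ ^ 2 * q2 - a₃ * q4) / t ^ 3

def gP3 (μ₁ μ₂ n1 n2 β₂ β₃ a₂ a₃ D r t q1 q2 q3 q4 : ℝ) : ℝ :=
  q2 * gB μ₁ μ₂ n1 n2 D q1 q2 q3 q4 + n1 * μ₁ ^ 2 * q3 / D ^ 2
    + β₂ * (q3 + a₂ * q1) / r ^ 3 + β₃ * (q3 - a₃ * q1) / t ^ 3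

def gP4 (μ₁ μ₂ n1 n2 β₂ β₃ a₂ a₃ D r t q1 q2 q3 q4 : ℝ) : ℝ :=
  -(q1 * gB μ₁ μ₂ n1 n2 D q1 q2 q3 q4) + n1 * μ₂ ^ 2 * q4 / D ^ 2
    + β₂ * (q4 + a₂ * q2) / r ^ 3 + β₃ * (q4 - a₃ * q2) / t ^ 3

lemma fred_deriv {μ₁ μ₂ : ℝ} (hμ : 0 < μ₁ - μ₂) (hμ' : 0 < μ₁ + μ₂) {A qi qj L : ℝ → ℝ}
    {A' qi' qj' L' : ℝ} (hA : HasDerivAt A A' 0) (hi : HasDerivAt qi qi' 0)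
    (hj : HasDerivAt qj qj' 0) (hL : HasDerivAt L L' 0) (hL0 : L 0 = 0) (hA0 : A 0 ≠ 0) :
    HasDerivAt (fun s => fred μ₁ μ₂ (A s) (qi s) (qj s) (L s))
      ((μ₁ ^ 2 * qi 0 * qi' + μ₂ ^ 2 * qj 0 * qj') / (2 * A 0 ^ 2)
        - (μ₁ ^ 2 * qi 0 ^ 2 + μ₂ ^ 2 * qj 0 ^ 2) * A' / (2 * A 0 ^ 3)) 0 := by
  have hd : ∀ m : ℝ, 0 < m → HasDerivAt (fun s => Real.sqrt (m ^ 2 - L s ^ 2)) 0 0 := by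
    intro m hm
    have h := ((hL.fun_pow 2).const_sub (m ^ 2)).sqrt (by simp [hL0, hm.ne'])
    refine h.congr_deriv ?_
    simp [hL0]
  have h1 := hd _ hμ
  have h2 := hd _ hμ'
  have e1 : Real.sqrt ((μ₁ - μ₂) ^ 2 - L 0 ^ 2) = μ₁ - μ₂ := by
    simp [hL0, Real.sqrt_sq hμ.le]
  have e2 : Real.sqrt ((μ₁ + μ₂) ^ 2 - L 0 ^ 2) = μ₁ + μ₂ := by
    simp [hL0, Real.sqrt_sq hμ'.le]
  have h := ((((h1.fun_add h2).fun_pow 2).fun_mul (hi.fun_pow 2)).fun_add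
    (((h1.fun_sub h2).fun_pow 2).fun_mul (hj.fun_pow 2))).fun_div
    ((hA.fun_pow 2).const_mul 16) (by positivity)
  refine h.congr_deriv ?_
  simp only [e1, e2]
  field_simp
  norm_num
  ring

lemma inv_sqrt_deriv (m : ℝ) {R : ℝ → ℝ} {R' : ℝ} (hR : HasDerivAt R R' 0) (h0 : 0 < R 0) :
    HasDerivAt (fun s => m / Real.sqrt (R s)) (-(m * R' / (2 * Real.sqrt (R 0) ^ 3))) 0 := by
  have hp := Real.sqrt_pos.2 h0
  have h := (hasDerivAt_const (0 : ℝ) m).fun_div (hR.sqrt h0.ne') hp.ne'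
  refine h.congr_deriv ?_
  field_simp
  ring

lemma diffAt_div {E : Type*} [NormedAddCommGroup E] [NormedSpace ℝ E] {f g : E → ℝ} {x : E}
    (hf : DifferentiableAt ℝ f x) (hg : DifferentiableAt ℝ g x) (h : g x ≠ 0) :
    DifferentiableAt ℝ (fun v => f v / g v) x := by
  simp only [div_eq_mul_inv]
  exact hf.fun_mul (hg.fun_inv h)

lemma Hred_differentiableAt {m₁ m₂ m₃ ν₁ ν₂ μ₁ μ₂ q1 q2 q3 q4 : ℝ}
    (hμ : 0 < μ₁ - μ₂) (hμ' : 0 < μ₁ + μ₂) (hD : q1 * q4 - q2 * q3 ≠ 0)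
    (h1 : 0 < q1 ^ 2 + q2 ^ 2)
    (h2 : 0 < (m₂ / (m₂ + m₃)) ^ 2 * (q1 ^ 2 + q2 ^ 2) + (q3 ^ 2 + q4 ^ 2)
      + 2 * (m₂ / (m₂ + m₃)) * (q1 * q3 + q2 * q4))
    (h3 : 0 < (m₃ / (m₂ + m₃)) ^ 2 * (q1 ^ 2 + q2 ^ 2) + (q3 ^ 2 + q4 ^ 2)
      - 2 * (m₃ / (m₂ + m₃)) * (q1 * q3 + q2 * q4)) :
    DifferentiableAt ℝ (Hred ν₁ ν₂ μ₁ μ₂ (Vnewt m₁ m₂ m₃))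
      (![q1, q2, q3, q4], (0 : Fin 4 → ℝ)) := by
  have hd : ∀ m : ℝ, 0 < m → DifferentiableAt ℝ (fun z : (Fin 4 → ℝ) × (Fin 4 → ℝ) =>
      Real.sqrt (m ^ 2 - (z.1 0 * z.2 1 - z.1 1 * z.2 0 + z.1 2 * z.2 3 - z.1 3 * z.2 2) ^ 2))
      (![q1, q2, q3, q4], (0 : Fin 4 → ℝ)) := by
    intro m hm
    refine DifferentiableAt.sqrt (by fun_prop) ?_
    simp [hm.ne']
  have hd1 := hd _ hμ
  have hd2 := hd _ hμ'
  unfold Hred Vnewt fred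
  simp only [Matrix.cons_val_zero, Matrix.cons_val_one, Matrix.cons_val]
  have hDA : (16 * ((q1 * q4 - q2 * q3) / 2) ^ 2) ≠ 0 := by positivity
  refine DifferentiableAt.add (DifferentiableAt.add ?_ ?_) (DifferentiableAt.sub
    (DifferentiableAt.sub (DifferentiableAt.neg ?_) ?_) ?_)
  · refine DifferentiableAt.const_mul (DifferentiableAt.add (by fun_prop) ?_) _
    refine diffAt_div ?_ ?_ ?_
    · fun_prop
    · fun_prop
    · simpa using hDA
  · refine DifferentiableAt.const_mul (DifferentiableAt.add (by fun_prop) ?_) _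
    refine diffAt_div ?_ ?_ ?_
    · fun_prop
    · fun_prop
    · simpa using hDA
  · refine diffAt_div ?_ (DifferentiableAt.sqrt ?_ ?_) ?_
    · fun_prop
    · fun_prop
    · exact h1.ne'
    · exact (Real.sqrt_pos.2 h1).ne'
  · refine diffAt_div ?_ (DifferentiableAt.sqrt ?_ ?_) ?_
    · fun_prop
    · fun_prop
    · exact h2.ne'
    · exact (Real.sqrt_pos.2 h2).ne'
  · refine diffAt_div ?_ (DifferentiableAt.sqrt ?_ ?_) ?_
    · fun_prop
    · fun_prop
    · exact h3.ne'
    · exact (Real.sqrt_pos.2 h3).ne'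

lemma Hred_fderiv_eq_zero {m₁ m₂ m₃ ν₁ ν₂ μ₁ μ₂ q1 q2 q3 q4 D ρ r t a₂ a₃ : ℝ}
    (hμ : 0 < μ₁ - μ₂) (hμ' : 0 < μ₁ + μ₂) (ha₂ : a₂ = m₂ / (m₂ + m₃)) (ha₃ : a₃ = m₃ / (m₂ + m₃))
    (hDd : D = q1 * q4 - q2 * q3) (hD : D ≠ 0)
    (h1 : 0 < q1 ^ 2 + q2 ^ 2)
    (h2 : 0 < a₂ ^ 2 * (q1 ^ 2 + q2 ^ 2) + (q3 ^ 2 + q4 ^ 2)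
      + 2 * a₂ * (q1 * q3 + q2 * q4))
    (h3 : 0 < a₃ ^ 2 * (q1 ^ 2 + q2 ^ 2) + (q3 ^ 2 + q4 ^ 2)
      - 2 * a₃ * (q1 * q3 + q2 * q4))
    (hρ : Real.sqrt (q1 ^ 2 + q2 ^ 2) = ρ)
    (hr : Real.sqrt (a₂ ^ 2 * (q1 ^ 2 + q2 ^ 2) + (q3 ^ 2 + q4 ^ 2)
      + 2 * a₂ * (q1 * q3 + q2 * q4)) = r)
    (ht : Real.sqrt (a₃ ^ 2 * (q1 ^ 2 + q2 ^ 2) + (q3 ^ 2 + q4 ^ 2)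
      - 2 * a₃ * (q1 * q3 + q2 * q4)) = t)
    (hP1 : gP1 μ₁ μ₂ (1 / ν₁) (1 / ν₂) (m₂ * m₃) (m₃ * m₁) (m₁ * m₂) a₂ a₃ D ρ r t q1 q2 q3 q4 = 0)
    (hP2 : gP2 μ₁ μ₂ (1 / ν₁) (1 / ν₂) (m₂ * m₃) (m₃ * m₁) (m₁ * m₂) a₂ a₃ D ρ r t q1 q2 q3 q4 = 0)
    (hP3 : gP3 μ₁ μ₂ (1 / ν₁) (1 / ν₂) (m₃ * m₁) (m₁ * m₂) a₂ a₃ D r t q1 q2 q3 q4 = 0)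
    (hP4 : gP4 μ₁ μ₂ (1 / ν₁) (1 / ν₂) (m₃ * m₁) (m₁ * m₂) a₂ a₃ D r t q1 q2 q3 q4 = 0) :
    fderiv ℝ (Hred ν₁ ν₂ μ₁ μ₂ (Vnewt m₁ m₂ m₃)) (![q1, q2, q3, q4], (0 : Fin 4 → ℝ)) = 0 := by
  have hdiff : DifferentiableAt ℝ (Hred ν₁ ν₂ μ₁ μ₂ (Vnewt m₁ m₂ m₃))
      (![q1, q2, q3, q4], (0 : Fin 4 → ℝ)) := by
    apply Hred_differentiableAt hμ hμ' (hDd ▸ hD) h1 (ha₂ ▸ h2) (ha₃ ▸ h3)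
  refine ContinuousLinearMap.ext fun v => ?_
  obtain ⟨a, b⟩ := v
  have hg : HasDerivAt (fun s : ℝ => ((![q1, q2, q3, q4], (0 : Fin 4 → ℝ)) + s • (a, b) :
      (Fin 4 → ℝ) × (Fin 4 → ℝ))) (a, b) 0 := by
    simpa using ((hasDerivAt_id (0 : ℝ)).smul_const (a, b)).const_add
      ((![q1, q2, q3, q4], (0 : Fin 4 → ℝ)) : (Fin 4 → ℝ) × (Fin 4 → ℝ))
  have hF : HasFDerivAt (Hred ν₁ ν₂ μ₁ μ₂ (Vnewt m₁ m₂ m₃))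
      (fderiv ℝ (Hred ν₁ ν₂ μ₁ μ₂ (Vnewt m₁ m₂ m₃)) (![q1, q2, q3, q4], (0 : Fin 4 → ℝ)))
      ((![q1, q2, q3, q4], (0 : Fin 4 → ℝ)) + (0 : ℝ) • (a, b)) := by
    simpa using hdiff.hasFDerivAt
  have hcomp := hF.comp_hasDerivAt (0 : ℝ) hg
  refine hcomp.unique ?_
  have hl : ∀ a v : ℝ, HasDerivAt (fun t : ℝ => a + t * v) v 0 := fun a v => by
    simpa using ((hasDerivAt_id (0 : ℝ)).mul_const v).const_add a
  have k1 := hl q1 (a 0)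
  have k2 := hl q2 (a 1)
  have k3 := hl q3 (a 2)
  have k4 := hl q4 (a 3)
  have p1 := hl 0 (b 0)
  have p2 := hl 0 (b 1)
  have p3 := hl 0 (b 2)
  have p4 := hl 0 (b 3)
  have hA := ((k1.fun_mul k4).fun_sub (k2.fun_mul k3)).div_const 2
  have hL := (((k1.fun_mul p2).fun_sub (k2.fun_mul p1)).fun_add (k3.fun_mul p4)).fun_sub
    (k4.fun_mul p3)
  have hA0 : ((q1 + 0 * a 0) * (q4 + 0 * a 3) - (q2 + 0 * a 1) * (q3 + 0 * a 2)) / 2 ≠ 0 := by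
    simpa [← hDd] using hD
  have f1 := fred_deriv hμ hμ' hA k3 k4 hL (by simp) hA0
  have f2 := fred_deriv hμ hμ' hA k1 k2 hL (by simp) hA0
  have s1 := (k1.fun_pow 2).fun_add (k2.fun_pow 2)
  have s2 := (k3.fun_pow 2).fun_add (k4.fun_pow 2)
  have s3 := (k1.fun_mul k3).fun_add (k2.fun_mul k4)
  have v1 := inv_sqrt_deriv (m₂ * m₃) s1 (by simpa using h1)
  have v2 := inv_sqrt_deriv (m₃ * m₁)
    (((s1.const_mul (a₂ ^ 2)).fun_add s2).fun_add (s3.const_mul (2 * a₂))) (by simpa using h2)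
  have v3 := inv_sqrt_deriv (m₁ * m₂)
    (((s1.const_mul (a₃ ^ 2)).fun_add s2).fun_sub (s3.const_mul (2 * a₃))) (by simpa using h3)
  have tot := (((((p1.fun_pow 2).fun_add (p2.fun_pow 2)).fun_add f1).const_mul (1 / (2 * ν₁))).fun_add
    ((((p3.fun_pow 2).fun_add (p4.fun_pow 2)).fun_add f2).const_mul (1 / (2 * ν₂)))).fun_add
    ((v1.fun_neg.fun_sub v2).fun_sub v3)
  have tot2 := tot.congr_deriv (g' := 0) (by
    simp only [zero_mul, add_zero, hρ, hr, ht, ← hDd]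
    have hρ0 : ρ ≠ 0 := by rw [← hρ]; exact (Real.sqrt_pos.2 h1).ne'
    have hr0 : r ≠ 0 := by rw [← hr]; exact (Real.sqrt_pos.2 h2).ne'
    have ht0 : t ≠ 0 := by rw [← ht]; exact (Real.sqrt_pos.2 h3).ne'
    have key : a 0 * gP1 μ₁ μ₂ (1 / ν₁) (1 / ν₂) (m₂ * m₃) (m₃ * m₁) (m₁ * m₂) a₂ a₃ D ρ r t q1 q2 q3 q4
      + a 1 * gP2 μ₁ μ₂ (1 / ν₁) (1 / ν₂) (m₂ * m₃) (m₃ * m₁) (m₁ * m₂) a₂ a₃ D ρ r t q1 q2 q3 q4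
      + a 2 * gP3 μ₁ μ₂ (1 / ν₁) (1 / ν₂) (m₃ * m₁) (m₁ * m₂) a₂ a₃ D r t q1 q2 q3 q4
      + a 3 * gP4 μ₁ μ₂ (1 / ν₁) (1 / ν₂) (m₃ * m₁) (m₁ * m₂) a₂ a₃ D r t q1 q2 q3 q4 = 0 := by
      rw [hP1, hP2, hP3, hP4]; ring
    refine Eq.trans ?_ key
    unfold gP1 gP2 gP3 gP4 gB
    simp only [Nat.cast_ofNat, show (2 - 1 : ℕ) = 1 from rfl, pow_one]
    ring)
  refine tot2.congr_of_eventuallyEq (Eventually.of_forall fun s => ?_)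
  rw [ha₂, ha₃]
  rfl

/-! ### Scaling -/

lemma gP_scaled {α β₂ β₃ a₂ a₃ γ k n1 n2 c K u x y z w μ₁ μ₂ δ ρ r t : ℝ} (hu : 0 < u) (hK : 0 < K)
    (hy : 0 < y) (hδ : δ = eDel u x y z w) (hδ0 : δ ≠ 0)
    (hρ : ρ = eRho u x z) (hr : r = eR a₂ u x y z w) (ht : t = eR (-a₃) u x y z w)
    (hρ0 : 0 < ρ) (hr0 : 0 < r) (ht0 : 0 < t)
    (hg2 : β₂ * a₂ = γ) (hg3 : β₃ * a₃ = γ)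
    (hμ1 : μ₁ ^ 2 = k * K) (hμ2 : μ₂ ^ 2 = c ^ 2 * u ^ 2 * (k * K))
    (E1 : eE1 α β₂ β₃ a₂ a₃ k n1 n2 c u x y z w = 0)
    (E2 : eE2 β₂ β₃ a₂ a₃ k n1 n2 c u x y z w = 0)
    (E3 : eE3 α β₂ β₃ a₂ a₃ γ k n1 n2 c u x y z w = 0)
    (E4 : eE4 β₂ β₃ a₂ a₃ k n1 n2 c u x y z w = 0) :
    gP1 μ₁ μ₂ n1 n2 α β₂ β₃ a₂ a₃ (K ^ 2 * u ^ 2 * δ) (K * u ^ 2 * ρ) (K * r) (K * t)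
      (K * u ^ 2 * x) (K * u ^ 10 * z) (K * u ^ 12 * w) (K * y) = 0 ∧
    gP2 μ₁ μ₂ n1 n2 α β₂ β₃ a₂ a₃ (K ^ 2 * u ^ 2 * δ) (K * u ^ 2 * ρ) (K * r) (K * t)
      (K * u ^ 2 * x) (K * u ^ 10 * z) (K * u ^ 12 * w) (K * y) = 0 ∧
    gP3 μ₁ μ₂ n1 n2 β₂ β₃ a₂ a₃ (K ^ 2 * u ^ 2 * δ) (K * r) (K * t)
      (K * u ^ 2 * x) (K * u ^ 10 * z) (K * u ^ 12 * w) (K * y) = 0 ∧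
    gP4 μ₁ μ₂ n1 n2 β₂ β₃ a₂ a₃ (K ^ 2 * u ^ 2 * δ) (K * r) (K * t)
      (K * u ^ 2 * x) (K * u ^ 10 * z) (K * u ^ 12 * w) (K * y) = 0 := by
  have hr2 : r ^ 2 = a₂ ^ 2 * (u ^ 4 * x ^ 2 + u ^ 20 * z ^ 2) + y ^ 2 + u ^ 24 * w ^ 2
      + 2 * a₂ * u ^ 10 * (u ^ 4 * x * w + z * y) := by
    rw [hr, eR, Real.sq_sqrt]
    by_contra hn
    rw [hr, eR, Real.sqrt_eq_zero_of_nonpos (not_le.1 hn).le] at hr0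
    exact lt_irrefl _ hr0
  have ht2 : t ^ 2 = (-a₃) ^ 2 * (u ^ 4 * x ^ 2 + u ^ 20 * z ^ 2) + y ^ 2 + u ^ 24 * w ^ 2
      + 2 * (-a₃) * u ^ 10 * (u ^ 4 * x * w + z * y) := by
    rw [ht, eR, Real.sq_sqrt]
    by_contra hn
    rw [ht, eR, Real.sqrt_eq_zero_of_nonpos (not_le.1 hn).le] at ht0
    exact lt_irrefl _ ht0
  have hQ : u ^ 4 * (((a₂ ^ 2 - a₃ ^ 2) * (x ^ 2 + u ^ 16 * z ^ 2)
        + 2 * (a₂ + a₃) * u ^ 6 * (u ^ 4 * x * w + z * y)) * eQ r t) = 1 / t ^ 3 - 1 / r ^ 3 := by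
    have : u ^ 4 * ((a₂ ^ 2 - a₃ ^ 2) * (x ^ 2 + u ^ 16 * z ^ 2)
        + 2 * (a₂ + a₃) * u ^ 6 * (u ^ 4 * x * w + z * y)) = r ^ 2 - t ^ 2 := by
      rw [hr2, ht2]; ring
    rw [← mul_assoc, this, eQ]
    have : t + r ≠ 0 := by positivity
    field_simp
    ring
  simp only [eE1, eB, eNx, ← hδ, ← hρ, ← hr, ← ht] at E1
  simp only [eE2, ← hδ, ← hr, ← ht] at E2
  simp only [eE3, eB, ← hδ, ← hρ, ← hr, ← ht] at E3
  simp only [eE4, eB, eNx, ← hδ, ← hr, ← ht] at E4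
  have hδe : x * y - u ^ 20 * z * w = δ := by rw [hδ, eDel]
  clear hδ hρ hr ht hr2 ht2
  have P1 : gP1 μ₁ μ₂ n1 n2 α β₂ β₃ a₂ a₃ (K ^ 2 * u ^ 2 * δ) (K * u ^ 2 * ρ) (K * r) (K * t)
      (K * u ^ 2 * x) (K * u ^ 10 * z) (K * u ^ 12 * w) (K * y) = 0 := by
    have : K ^ 2 * u ^ 4 * gP1 μ₁ μ₂ n1 n2 α β₂ β₃ a₂ a₃ (K ^ 2 * u ^ 2 * δ) (K * u ^ 2 * ρ)
      (K * r) (K * t) (K * u ^ 2 * x) (K * u ^ 10 * z) (K * u ^ 12 * w) (K * y) = 0 := by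
      rw [← E1]
      simp only [gP1, gB, hμ1, hμ2]
      field_simp
      ring
    simpa [hK.ne', hu.ne'] using this
  have P4 : gP4 μ₁ μ₂ n1 n2 β₂ β₃ a₂ a₃ (K ^ 2 * u ^ 2 * δ) (K * r) (K * t)
      (K * u ^ 2 * x) (K * u ^ 10 * z) (K * u ^ 12 * w) (K * y) = 0 := by
    have : K ^ 2 * gP4 μ₁ μ₂ n1 n2 β₂ β₃ a₂ a₃ (K ^ 2 * u ^ 2 * δ) (K * r) (K * t)
      (K * u ^ 2 * x) (K * u ^ 10 * z) (K * u ^ 12 * w) (K * y) = 0 := by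
      rw [← E2]
      have hcan : n1 * (c ^ 2 * k) * y / (u ^ 2 * δ ^ 2) - x * n1 * (c ^ 2 * k) * y ^ 2 / (u ^ 2 * δ ^ 3)
          = - (k * n1 * c ^ 2 * u ^ 18 * y * z * w / δ ^ 3) := by
        field_simp
        rw [← hδe]
        ring
      rw [sub_eq_add_neg (-_), ← hcan]
      simp only [gP4, gB, hμ1, hμ2]
      field_simp
      ring
    simpa [hK.ne', hu.ne'] using this
  have P2 : gP2 μ₁ μ₂ n1 n2 α β₂ β₃ a₂ a₃ (K ^ 2 * u ^ 2 * δ) (K * u ^ 2 * ρ) (K * r) (K * t)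
      (K * u ^ 2 * x) (K * u ^ 10 * z) (K * u ^ 12 * w) (K * y) = 0 := by
    have : K ^ 2 * gP2 μ₁ μ₂ n1 n2 α β₂ β₃ a₂ a₃ (K ^ 2 * u ^ 2 * δ) (K * u ^ 2 * ρ) (K * r) (K * t)
      (K * u ^ 2 * x) (K * u ^ 10 * z) (K * u ^ 12 * w) (K * y) = 0 := by
      have e : K ^ 2 * gP2 μ₁ μ₂ n1 n2 α β₂ β₃ a₂ a₃ (K ^ 2 * u ^ 2 * δ) (K * u ^ 2 * ρ) (K * r)
        (K * t) (K * u ^ 2 * x) (K * u ^ 10 * z) (K * u ^ 12 * w) (K * y)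
          = u ^ 4 * (u ^ 4 * w * (k * (n1 * (u ^ 22 * w ^ 2 + c ^ 2 * y ^ 2)
            + u ^ 2 * n2 * (x ^ 2 + c ^ 2 * u ^ 18 * z ^ 2)) / δ ^ 3)
            + k * n2 * c ^ 2 * u ^ 4 * z / δ ^ 2 + α * z / ρ ^ 3
            + u ^ 6 * z * (a₂ ^ 2 * β₂ / r ^ 3 + a₃ ^ 2 * β₃ / t ^ 3))
            - y * ((β₃ * a₃) * (1 / t ^ 3) - (β₂ * a₂) * (1 / r ^ 3)) := by
        simp only [gP2, gB, hμ1, hμ2]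
        field_simp
        ring
      rw [e, hg2, hg3]
      linear_combination u ^ 4 * E3 + γ * y * hQ
    simpa [hK.ne', hu.ne'] using this
  refine ⟨P1, P2, ?_, P4⟩
  have : y * K ^ 2 * gP3 μ₁ μ₂ n1 n2 β₂ β₃ a₂ a₃ (K ^ 2 * u ^ 2 * δ) (K * r) (K * t)
      (K * u ^ 2 * x) (K * u ^ 10 * z) (K * u ^ 12 * w) (K * y) = 0 := by
    have e : y * K ^ 2 * gP3 μ₁ μ₂ n1 n2 β₂ β₃ a₂ a₃ (K ^ 2 * u ^ 2 * δ) (K * r) (K * t)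
      (K * u ^ 2 * x) (K * u ^ 10 * z) (K * u ^ 12 * w) (K * y)
      - K ^ 2 * u ^ 2 * x * gP2 μ₁ μ₂ n1 n2 α β₂ β₃ a₂ a₃ (K ^ 2 * u ^ 2 * δ) (K * u ^ 2 * ρ)
        (K * r) (K * t) (K * u ^ 2 * x) (K * u ^ 10 * z) (K * u ^ 12 * w) (K * y)
      + K ^ 2 * u ^ 10 * z * gP1 μ₁ μ₂ n1 n2 α β₂ β₃ a₂ a₃ (K ^ 2 * u ^ 2 * δ) (K * u ^ 2 * ρ)
        (K * r) (K * t) (K * u ^ 2 * x) (K * u ^ 10 * z) (K * u ^ 12 * w) (K * y) = u ^ 8 * 0 := by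
      rw [← E4]
      simp only [gP1, gP2, gP3, gB, hμ1, hμ2]
      field_simp
      ring
    rw [P1, P2] at e
    simpa using e
  simpa [hK.ne', hu.ne', hy.ne'] using this

/-- For general masses there is a family of zero-momentum critical points of the fully
reduced Hamiltonian for small `μ₂ > 0`, with the asymptotics of Lemma 8. -/
theorem general_masses_equilibrium_family (m₁ m₂ m₃ μ₁ : ℝ) (hm₁ : 0 < m₁)
    (hm₂ : 0 < m₂) (hm₃ : 0 < m₃) (hμ₁ : 0 < μ₁) :
    (let Mtot := m₁ + m₂ + m₃
     let ν₁ := m₂ * m₃ / (m₂ + m₃)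
     let ν₂ := m₁ * (m₂ + m₃) / Mtot
     let κ := Mtot / (m₁ ^ 2 * (m₂ + m₃) ^ 2)
     let u : ℝ → ℝ := fun μ₂ => (μ₂ / μ₁) / (m₂ * m₃ * Real.sqrt (κ / (m₂ + m₃)))
     ∃ ε > 0, ∃ q₁ q₂ q₃ q₄ : ℝ → ℝ,
       (∀ μ₂ ∈ Set.Ioo (0 : ℝ) ε,
         fderiv ℝ (Hred ν₁ ν₂ μ₁ μ₂ (Vnewt m₁ m₂ m₃))
           (![q₁ μ₂, q₂ μ₂, q₃ μ₂, q₄ μ₂], (0 : Fin 4 → ℝ)) = 0) ∧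
       Tendsto (fun μ₂ => q₁ μ₂ / (κ * μ₁ ^ 2 * u μ₂ ^ 2)) (𝓝[>] 0) (𝓝 1) ∧
       Tendsto (fun μ₂ => q₄ μ₂ / (κ * μ₁ ^ 2)) (𝓝[>] 0) (𝓝 1) ∧
       Tendsto (fun μ₂ => q₂ μ₂ / (κ * μ₁ ^ 2 * u μ₂ ^ 10)) (𝓝[>] 0)
         (𝓝 ((3 / 2) * m₁ * (m₂ - m₃) / (m₂ + m₃) ^ 2)) ∧
       Tendsto (fun μ₂ => q₃ μ₂ / (κ * μ₁ ^ 2 * u μ₂ ^ 12)) (𝓝[>] 0)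
         (𝓝 (-((3 / 2) * Mtot * m₂ * m₃ * (m₂ - m₃) / (m₂ + m₃) ^ 4)))) := by
  intro Mtot ν₁ ν₂ κ u
  have hM : 0 < Mtot := by positivity
  have hs : 0 < m₂ + m₃ := by positivity
  have hν₁ : 0 < ν₁ := by positivity
  have hν₂ : 0 < ν₂ := by positivity
  have hκ : 0 < κ := by positivity
  set c := m₂ * m₃ * Real.sqrt (κ / (m₂ + m₃)) with hc
  have hκs : 0 < κ / (m₂ + m₃) := by positivity
  have hc0 : 0 < c := mul_pos (mul_pos hm₂ hm₃) (Real.sqrt_pos.2 hκs)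
  have hc2 : c ^ 2 = m₂ ^ 2 * m₃ ^ 2 * (κ / (m₂ + m₃)) := by
    rw [hc, mul_pow, Real.sq_sqrt hκs.le]; ring
  set K := κ * μ₁ ^ 2 with hK
  have hK0 : 0 < K := by positivity
  set a₂ := m₂ / (m₂ + m₃) with ha₂
  set a₃ := m₃ / (m₂ + m₃) with ha₃
  set z₀ := (3 / 2) * m₁ * (m₂ - m₃) / (m₂ + m₃) ^ 2 with hz₀
  set w₀ := -((3 / 2) * Mtot * m₂ * m₃ * (m₂ - m₃) / (m₂ + m₃) ^ 4) with hw₀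
  obtain ⟨ψ, hψ, hψ0⟩ := ePhi_exists (α := m₂ * m₃) (β₂ := m₃ * m₁) (β₃ := m₁ * m₂) (a₂ := a₂)
    (a₃ := a₃) (γ := m₁ * m₂ * m₃ / (m₂ + m₃)) (k := 1 / κ) (n1 := 1 / ν₁) (n2 := 1 / ν₂) (c := c)
    (z₀ := z₀) (w₀ := w₀) (by positivity) (by positivity) (by positivity) (by positivity)
    (by rw [hc2]; simp only [ν₁]; field_simp) (by simp only [κ, ν₂]; field_simp; ring)
    (by simp only [hz₀, ha₂, ha₃]; field_simp; ring)
    (by simp only [hz₀, hw₀, ν₁, ν₂]; field_simp; ring)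
  have hx : Tendsto (fun u => (ψ u).1) (𝓝 0) (𝓝 1) := (continuous_fst.tendsto _).comp hψ
  have hψ2 : Tendsto (fun u => (ψ u).2) (𝓝 0) (𝓝 (1, z₀, w₀)) := (continuous_snd.tendsto _).comp hψ
  have hy : Tendsto (fun u => (ψ u).2.1) (𝓝 0) (𝓝 1) := (continuous_fst.tendsto _).comp hψ2
  have hψ3 : Tendsto (fun u => (ψ u).2.2) (𝓝 0) (𝓝 (z₀, w₀)) := (continuous_snd.tendsto _).comp hψ2
  have hz : Tendsto (fun u => (ψ u).2.2.1) (𝓝 0) (𝓝 z₀) := (continuous_fst.tendsto _).comp hψ3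
  have hw : Tendsto (fun u => (ψ u).2.2.2) (𝓝 0) (𝓝 w₀) := (continuous_snd.tendsto _).comp hψ3
  have hid : Tendsto (fun u : ℝ => u) (𝓝 0) (𝓝 0) := tendsto_id
  have hδ : ∀ᶠ u in 𝓝 (0 : ℝ), 0 < eDel u (ψ u).1 (ψ u).2.1 (ψ u).2.2.1 (ψ u).2.2.2 := by
    have : Tendsto (fun u => eDel u (ψ u).1 (ψ u).2.1 (ψ u).2.2.1 (ψ u).2.2.2) (𝓝 0)
        (𝓝 (1 * 1 - 0 ^ 20 * z₀ * w₀)) :=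
      (hx.mul hy).sub (((hid.pow 20).mul hz).mul hw)
    exact this.eventually (lt_mem_nhds (by norm_num))
  have hR : ∀ a : ℝ, ∀ᶠ u in 𝓝 (0 : ℝ), 0 < eR a u (ψ u).1 (ψ u).2.1 (ψ u).2.2.1 (ψ u).2.2.2 := by
    intro a
    have : Tendsto (fun u => eR a u (ψ u).1 (ψ u).2.1 (ψ u).2.2.1 (ψ u).2.2.2) (𝓝 0)
        (𝓝 (eR a 0 1 1 z₀ w₀)) := by
      unfold eR
      refine (Real.continuous_sqrt.tendsto _).comp ?_
      exact ((((((hid.pow 4).mul (hx.pow 2)).add ((hid.pow 20).mul (hz.pow 2))).const_mul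
        (a ^ 2)).add (hy.pow 2)).add ((hid.pow 24).mul (hw.pow 2))).add
        (((hid.pow 10).const_mul (2 * a)).mul ((((hid.pow 4).mul hx).mul hw).add (hz.mul hy)))
    rw [eR_zero _ _ _ _ one_pos] at this
    exact this.eventually (lt_mem_nhds one_pos)
  have hu0 : Tendsto u (𝓝[>] 0) (𝓝 0) := by
    have : Continuous u := by
      simp only [u]
      fun_prop
    have h := this.tendsto 0
    have h0 : u 0 = 0 := by simp [u]
    rw [h0] at h
    exact h.mono_left nhdsWithin_le_nhds
  have hupos : ∀ μ₂ : ℝ, 0 < μ₂ → 0 < u μ₂ := fun μ₂ h => div_pos (div_pos h hμ₁) hc0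
  have hev : ∀ᶠ μ₂ in 𝓝[>] (0 : ℝ), μ₂ < μ₁ ∧
      (0 < (ψ (u μ₂)).1 ∧ 0 < (ψ (u μ₂)).2.1) ∧
      ePhi (m₂ * m₃) (m₃ * m₁) (m₁ * m₂) a₂ a₃ (m₁ * m₂ * m₃ / (m₂ + m₃)) (1 / κ) (1 / ν₁)
        (1 / ν₂) c (u μ₂, ψ (u μ₂)) = 0 ∧
      0 < eDel (u μ₂) (ψ (u μ₂)).1 (ψ (u μ₂)).2.1 (ψ (u μ₂)).2.2.1 (ψ (u μ₂)).2.2.2 ∧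
      0 < eR a₂ (u μ₂) (ψ (u μ₂)).1 (ψ (u μ₂)).2.1 (ψ (u μ₂)).2.2.1 (ψ (u μ₂)).2.2.2 ∧
      0 < eR (-a₃) (u μ₂) (ψ (u μ₂)).1 (ψ (u μ₂)).2.1 (ψ (u μ₂)).2.2.1 (ψ (u μ₂)).2.2.2 := by
    have hlt : ∀ᶠ μ₂ in 𝓝[>] (0 : ℝ), μ₂ < μ₁ :=
      (show ∀ᶠ μ₂ in 𝓝 (0 : ℝ), μ₂ < μ₁ from Iio_mem_nhds hμ₁).filter_mono nhdsWithin_le_nhds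
    exact hlt.and (hu0.eventually
      (((hx.eventually (lt_mem_nhds one_pos)).and (hy.eventually (lt_mem_nhds one_pos))).and
      (hψ0.and (hδ.and ((hR a₂).and (hR (-a₃)))))))
  obtain ⟨ε, hε, hεs⟩ := mem_nhdsGT_iff_exists_Ioo_subset.1 hev
  refine ⟨ε, hε, fun μ₂ => K * u μ₂ ^ 2 * (ψ (u μ₂)).1, fun μ₂ => K * u μ₂ ^ 10 * (ψ (u μ₂)).2.2.1,
    fun μ₂ => K * u μ₂ ^ 12 * (ψ (u μ₂)).2.2.2, fun μ₂ => K * (ψ (u μ₂)).2.1, ?_, ?_, ?_, ?_, ?_⟩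
  · intro μ₂ hμ₂
    have hup := hupos μ₂ hμ₂.1
    obtain ⟨hlt, ⟨hx0, hy0⟩, hΦ, hδ0, hr0, ht0⟩ := hεs hμ₂
    have huμ : μ₂ = c * u μ₂ * μ₁ := by
      have : u μ₂ = μ₂ / μ₁ / c := rfl
      rw [this]
      field_simp
    beta_reduce
    generalize u μ₂ = U at hup hx0 hy0 hΦ hδ0 hr0 ht0 huμ ⊢
    generalize ψ U = X at hx0 hy0 hΦ hδ0 hr0 ht0 ⊢
    obtain ⟨x, y, z, w⟩ := X
    simp only at hx0 hy0 hΦ hδ0 hr0 ht0 ⊢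
    simp only [ePhi, Prod.mk_eq_zero] at hΦ
    obtain ⟨E1, E2, E3, E4⟩ := hΦ
    have hρ0 : 0 < eRho U x z := Real.sqrt_pos.2 (by positivity)
    have hμ1 : μ₁ ^ 2 = 1 / κ * K := by rw [hK]; field_simp
    obtain ⟨P1, P2, P3, P4⟩ := gP_scaled (μ₁ := μ₁) (μ₂ := μ₂) (K := K) hup hK0 hy0 rfl hδ0.ne'
      rfl rfl rfl hρ0 hr0 ht0 (by rw [ha₂]; ring) (by rw [ha₃]; ring)
      hμ1
      (by rw [← hμ1]; nth_rewrite 1 [huμ]; ring) E1 E2 E3 E4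
    have q1p : 0 < (K * U ^ 2 * x) ^ 2 + (K * U ^ 10 * z) ^ 2 := by positivity
    have e2 : a₂ ^ 2 * ((K * U ^ 2 * x) ^ 2 + (K * U ^ 10 * z) ^ 2)
        + ((K * U ^ 12 * w) ^ 2 + (K * y) ^ 2)
        + 2 * a₂ * (K * U ^ 2 * x * (K * U ^ 12 * w) + K * U ^ 10 * z * (K * y))
        = K ^ 2 * (a₂ ^ 2 * (U ^ 4 * x ^ 2 + U ^ 20 * z ^ 2) + y ^ 2 + U ^ 24 * w ^ 2
          + 2 * a₂ * U ^ 10 * (U ^ 4 * x * w + z * y)) := by ring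
    have e3 : a₃ ^ 2 * ((K * U ^ 2 * x) ^ 2 + (K * U ^ 10 * z) ^ 2)
        + ((K * U ^ 12 * w) ^ 2 + (K * y) ^ 2)
        - 2 * a₃ * (K * U ^ 2 * x * (K * U ^ 12 * w) + K * U ^ 10 * z * (K * y))
        = K ^ 2 * ((-a₃) ^ 2 * (U ^ 4 * x ^ 2 + U ^ 20 * z ^ 2) + y ^ 2 + U ^ 24 * w ^ 2
          + 2 * (-a₃) * U ^ 10 * (U ^ 4 * x * w + z * y)) := by ring
    refine Hred_fderiv_eq_zero (sub_pos.2 hlt) (add_pos hμ₁ hμ₂.1) ha₂ ha₃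
      (D := K ^ 2 * U ^ 2 * eDel U x y z w) ?_ ?_ q1p ?_ ?_ ?_ ?_ ?_ P1 P2 P3 P4
    · rw [eDel]; ring
    · positivity
    · rw [e2]; exact mul_pos (by positivity) (Real.sqrt_pos.1 hr0)
    · rw [e3]; exact mul_pos (by positivity) (Real.sqrt_pos.1 ht0)
    · have : (K * U ^ 2 * x) ^ 2 + (K * U ^ 10 * z) ^ 2
          = (K * U ^ 2) ^ 2 * (x ^ 2 + U ^ 16 * z ^ 2) := by ring
      rw [this, Real.sqrt_mul (by positivity), Real.sqrt_sq (by positivity), eRho]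
    · rw [e2, Real.sqrt_mul (by positivity), Real.sqrt_sq hK0.le, eR]
    · rw [e3, Real.sqrt_mul (by positivity), Real.sqrt_sq hK0.le, eR]
  · refine (hx.comp hu0).congr' ?_
    filter_upwards [self_mem_nhdsWithin] with μ₂ hμ₂
    have := hupos μ₂ hμ₂
    simp only [Function.comp]
    field_simp
  · refine (hy.comp hu0).congr' ?_
    filter_upwards [self_mem_nhdsWithin] with μ₂ hμ₂
    simp only [Function.comp]
    field_simp
  · refine (hz.comp hu0).congr' ?_
    filter_upwards [self_mem_nhdsWithin] with μ₂ hμ₂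
    have := hupos μ₂ hμ₂
    simp only [Function.comp]
    field_simp
  · refine (hw.comp hu0).congr' ?_
    filter_upwards [self_mem_nhdsWithin] with μ₂ hμ₂
    have := hupos μ₂ hμ₂
    simp only [Function.comp]
    field_simp

end
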